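/- arXiv:2012.05777 — 3 statements merged into one kernel-verified Lean document; each statement's English description precedes it below -/
import Mathlib

section
/- Let E be a finite-dimensional real normed vector space, F a real normed vector space, U ⊆ E an open convex set, K ≥ 0, and let s ⊆ E be a finite union of proper affine subspaces of E. Suppose f : E → F is continuous on U, is differentiable at every point of U \ s, and satisfies ‖Df_x‖ ≤ K (operator norm of the Fréchet derivative) for every x ∈ U \ s. Then f is K-Lipschitz on U: ‖f(z) − f(z')‖ ≤ K‖z − z'‖ for all z, z' ∈ U. -/
theorem aux_one_dim {F : Type*} [NormedAddCommGroup F] [NormedSpace ℝ F]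
    (g g' : ℝ → F) (C : ℝ) (T : Finset ℝ) :
    ∀ a b : ℝ, a ≤ b → ContinuousOn g (Set.Icc a b) →
      (∀ x ∈ Set.Ioo a b, x ∉ T → HasDerivAt g (g' x) x ∧ ‖g' x‖ ≤ C) →
      ‖g b - g a‖ ≤ C * (b - a) := by
  induction T using Finset.induction_on with
  | empty =>
    intro a b hab hc hd
    rcases hab.eq_or_lt with rfl | hab
    · simp
    have h1 : ∀ x ∈ Set.Ioo a b, ‖g b - g x‖ ≤ C * (b - x) := by
      intro x hx
      refine norm_image_sub_le_of_norm_deriv_right_le_segment (f' := g')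
        (hc.mono (Set.Icc_subset_Icc_left hx.1.le)) ?_ ?_ b ⟨hx.2.le, le_rfl⟩
      · intro y hy
        exact (hd y ⟨hx.1.trans_le hy.1, hy.2⟩ (by simp)).1.hasDerivWithinAt
      · intro y hy
        exact (hd y ⟨hx.1.trans_le hy.1, hy.2⟩ (by simp)).2
    have hca : Filter.Tendsto g (nhdsWithin a (Set.Ioo a b)) (nhds (g a)) :=
      (hc a ⟨le_rfl, hab.le⟩).mono_left (nhdsWithin_mono _ Set.Ioo_subset_Icc_self)
    have hid : Filter.Tendsto (fun x : ℝ => C * (b - x)) (nhdsWithin a (Set.Ioo a b))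
        (nhds (C * (b - a))) :=
      ((by fun_prop : Continuous (fun x : ℝ => C * (b - x))).tendsto a).mono_left
        nhdsWithin_le_nhds
    haveI : (nhdsWithin a (Set.Ioo a b)).NeBot := left_nhdsWithin_Ioo_neBot hab
    refine le_of_tendsto_of_tendsto (tendsto_const_nhds.sub hca).norm hid ?_
    filter_upwards [self_mem_nhdsWithin] with x hx using h1 x hx
  | insert c T _ ih =>
    intro a b hab hc hd
    by_cases h : c ∈ Set.Ioo a b
    · have h1 := ih a c h.1.le (hc.mono (Set.Icc_subset_Icc_right h.2.le)) (by
        intro x hx hxT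
        refine hd x ⟨hx.1, hx.2.trans h.2⟩ ?_
        simp [hxT, hx.2.ne])
      have h2 := ih c b h.2.le (hc.mono (Set.Icc_subset_Icc_left h.1.le)) (by
        intro x hx hxT
        refine hd x ⟨h.1.trans hx.1, hx.2⟩ ?_
        simp [hxT, hx.1.ne'])
      have h3 : g b - g a = (g b - g c) + (g c - g a) := by abel
      rw [h3]
      refine (norm_add_le _ _).trans ?_
      linarith
    · refine ih a b hab hc ?_
      intro x hx hxT
      refine hd x hx ?_
      rw [Finset.mem_insert]
      rintro (rfl | h')
      · exact h hx
      · exact hxT h'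

theorem aux_dense {E : Type*} [NormedAddCommGroup E] [NormedSpace ℝ E] [FiniteDimensional ℝ E]
    (S : Finset (AffineSubspace ℝ E)) (hproper : ∀ W ∈ S, W.direction ≠ ⊤) :
    Dense {v : E | ∀ W ∈ S, v ∉ W.direction} := by
  borelize E
  refine MeasureTheory.Measure.dense_of_ae (μ := MeasureTheory.Measure.addHaar) ?_
  rw [Filter.eventually_all_finset]
  intro W hW
  exact MeasureTheory.measure_eq_zero_iff_ae_notMem.mp
    (MeasureTheory.Measure.addHaar_submodule _ _ (hproper W hW))

theorem aux_generic {E F : Type*} [NormedAddCommGroup E] [NormedSpace ℝ E]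
    [NormedAddCommGroup F] [NormedSpace ℝ F]
    (U : Set E) (hUconv : Convex ℝ U) (K : ℝ)
    (S : Finset (AffineSubspace ℝ E))
    (f : E → F) (hfc : ContinuousOn f U)
    (f' : E → E →L[ℝ] F)
    (hf' : ∀ x ∈ U, (∀ W ∈ S, x ∉ W) → HasFDerivAt f (f' x) x ∧ ‖f' x‖ ≤ K)
    (z : E) (hz : z ∈ U) (v : E) (hzv : z + v ∈ U) (hv : ∀ W ∈ S, v ∉ W.direction) :
    ‖f (z + v) - f z‖ ≤ K * ‖v‖ := by
  have hfin : {t : ℝ | ∃ W ∈ S, z + t • v ∈ W}.Finite := by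
    have : {t : ℝ | ∃ W ∈ S, z + t • v ∈ W} = ⋃ W ∈ S, {t : ℝ | z + t • v ∈ W} := by
      ext t; simp
    rw [this]
    refine S.finite_toSet.biUnion ?_
    intro W hW
    refine Set.Subsingleton.finite ?_
    intro t ht t' ht'
    by_contra hne
    apply hv W hW
    have h1 := AffineSubspace.vsub_mem_direction ht ht'
    have h2 : (z + t • v) -ᵥ (z + t' • v) = (t - t') • v := by
      rw [vsub_eq_sub, sub_smul]; abel
    rw [h2] at h1
    exact (Submodule.smul_mem_iff _ (sub_ne_zero.mpr hne)).mp h1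
  have hmem : ∀ t ∈ Set.Icc (0 : ℝ) 1, z + t • v ∈ U := fun t ht =>
    hUconv.add_smul_mem hz hzv ht
  have key := aux_one_dim (fun t : ℝ => f (z + t • v)) (fun t => f' (z + t • v) v) (K * ‖v‖)
    hfin.toFinset 0 1 zero_le_one
    (hfc.comp (by fun_prop) hmem) (by
      intro t ht htT
      have htT' : ∀ W ∈ S, z + t • v ∉ W := by simpa using htT
      obtain ⟨h1, h2⟩ := hf' _ (hmem t ⟨ht.1.le, ht.2.le⟩) htT'
      refine ⟨?_, ?_⟩
      · have hl : HasDerivAt (fun t : ℝ => z + t • v) v t := by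
          simpa using ((hasDerivAt_id t).smul_const v).const_add z
        exact h1.comp_hasDerivAt t hl
      · exact (f' (z + t • v)).le_of_opNorm_le h2 v)
  simpa using key


/-- Mean value inequality for piecewise differentiable maps: if `f` is continuous on an
open convex set `U` of a finite-dimensional real normed space, differentiable with
derivative of operator norm at most `K` outside a finite union `s` of proper affine
subspaces (affine subspaces whose direction is a proper linear subspace), then `f` is
`K`-Lipschitz on `U`. -/
theorem lipschitzOnWith_of_piecewise_differentiable
    (E F : Type*) [NormedAddCommGroup E] [NormedSpace ℝ E] [FiniteDimensional ℝ E]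
    [NormedAddCommGroup F] [NormedSpace ℝ F]
    (U : Set E) (hU : IsOpen U) (hUconv : Convex ℝ U) (K : ℝ) (hK : 0 ≤ K)
    (S : Finset (AffineSubspace ℝ E)) (hproper : ∀ W ∈ S, W.direction ≠ ⊤)
    (s : Set E) (hs : s = ⋃ W ∈ S, (W : Set E))
    (f : E → F) (hfc : ContinuousOn f U)
    (f' : E → E →L[ℝ] F)
    (hf' : ∀ x ∈ U \ s, HasFDerivAt f (f' x) x)
    (hbound : ∀ x ∈ U \ s, ‖f' x‖ ≤ K) :
    ∀ z ∈ U, ∀ z' ∈ U, ‖f z - f z'‖ ≤ K * ‖z - z'‖ := by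
  intro z hz z' hz'
  have hf2 : ∀ x ∈ U, (∀ W ∈ S, x ∉ W) → HasFDerivAt f (f' x) x ∧ ‖f' x‖ ≤ K := by
    intro x hx h
    have hx' : x ∈ U \ s := ⟨hx, by simpa [hs] using h⟩
    exact ⟨hf' x hx', hbound x hx'⟩
  have hd := aux_dense S hproper
  set D : Set E := {v : E | ∀ W ∈ S, v ∉ W.direction} with hD
  haveI : (nhdsWithin (z - z') D).NeBot := mem_closure_iff_nhdsWithin_neBot.mp (hd (z - z'))
  have hadd : Filter.Tendsto (fun v : E => z' + v) (nhdsWithin (z - z') D) (nhds z) := by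
    have h : Filter.Tendsto (fun v : E => z' + v) (nhds (z - z')) (nhds (z' + (z - z'))) :=
      (by fun_prop : Continuous (fun v : E => z' + v)).tendsto _
    rw [add_sub_cancel] at h
    exact h.mono_left nhdsWithin_le_nhds
  have hfz : Filter.Tendsto (fun v : E => f (z' + v)) (nhdsWithin (z - z') D) (nhds (f z)) :=
    (hfc.continuousAt (hU.mem_nhds hz)).tendsto.comp hadd
  have hR : Filter.Tendsto (fun v : E => K * ‖v‖) (nhdsWithin (z - z') D)
      (nhds (K * ‖z - z'‖)) :=
    ((by fun_prop : Continuous (fun v : E => K * ‖v‖)).tendsto _).mono_left nhdsWithin_le_nhds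
  refine le_of_tendsto_of_tendsto (hfz.sub tendsto_const_nhds).norm hR ?_
  filter_upwards [self_mem_nhdsWithin, hadd.eventually (hU.mem_nhds hz)] with v hv hvU
  exact aux_generic U hUconv K S f hfc f' hf2 z' hz' v hvU hv
end

section
/- Let ℓ : ℝ² → ℝ^{2n} be a C³ (e.g. smooth), ℤ²-periodic, isotropic map. Then there exists a constant C > 0 such that for every integer N ≥ 1 and every z ∈ ℝ²: |ω( ℓ(z + (1/N, 1/N)) − ℓ(z), ℓ(z + (0, 1/N)) − ℓ(z + (1/N, 0)) )| ≤ C · N^{-4}. Equivalently, the discrete symplectic density η_N(z) := (N²/2)·ω(Dᵘ_N(z), Dᵛ_N(z)) of the samples of ℓ satisfies sup_z |η_N(z)| ≤ C·N^{-2}. -/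
/-- The point of `ℝ² = EuclideanSpace ℝ (Fin 2)` with coordinates `(a, b)`. -/
noncomputable def e2 (a b : ℝ) : EuclideanSpace ℝ (Fin 2) :=
  (WithLp.equiv 2 (Fin 2 → ℝ)).symm ![a, b]

/-- The standard symplectic form `ω` on `ℝ^{2n}`:
`ω(u,v) = ∑_{j=0}^{n-1} (u_{2j} v_{2j+1} − u_{2j+1} v_{2j})`. -/
noncomputable def stdSymp (n : ℕ) (u v : EuclideanSpace ℝ (Fin (2 * n))) : ℝ :=
  ∑ j : Fin n,
    (u ⟨2 * j.1, by have := j.2; omega⟩ * v ⟨2 * j.1 + 1, by have := j.2; omega⟩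
      - u ⟨2 * j.1 + 1, by have := j.2; omega⟩ * v ⟨2 * j.1, by have := j.2; omega⟩)

theorem stdSymp_expand (n : ℕ) (h : ℝ) (a b r s : EuclideanSpace ℝ (Fin (2 * n))) :
    stdSymp n (h • a + r) (h • b + s) =
      h ^ 2 * stdSymp n a b + h * stdSymp n a s + h * stdSymp n r b + stdSymp n r s := by
  simp only [stdSymp, Finset.mul_sum, ← Finset.sum_add_distrib]
  refine Finset.sum_congr rfl fun j _ => ?_
  simp only [PiLp.add_apply, PiLp.smul_apply, smul_eq_mul]
  ring

theorem stdSymp_diag (n : ℕ) (a b : EuclideanSpace ℝ (Fin (2 * n))) :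
    stdSymp n (a + b) (b - a) = 2 * stdSymp n a b := by
  simp only [stdSymp, Finset.mul_sum]
  refine Finset.sum_congr rfl fun j _ => ?_
  simp only [PiLp.add_apply, PiLp.sub_apply]
  ring

theorem stdSymp_bound (n : ℕ) (u v : EuclideanSpace ℝ (Fin (2 * n))) :
    |stdSymp n u v| ≤ (2 * n : ℝ) * (‖u‖ * ‖v‖) := by
  have key : ∀ i j : Fin (2 * n), |u i * v j| ≤ ‖u‖ * ‖v‖ := by
    intro i j
    rw [abs_mul]
    have h1 : |u i| ≤ ‖u‖ := PiLp.norm_apply_le u i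
    have h2 : |v j| ≤ ‖v‖ := PiLp.norm_apply_le v j
    gcongr
  unfold stdSymp
  refine (Finset.abs_sum_le_sum_abs _ _).trans ?_
  refine (Finset.sum_le_sum (g := fun _ => 2 * (‖u‖ * ‖v‖)) fun j _ => ?_).trans ?_
  · refine (abs_sub _ _).trans ?_
    linarith [key ⟨2 * j.1, by have := j.2; omega⟩ ⟨2 * j.1 + 1, by have := j.2; omega⟩,
      key ⟨2 * j.1 + 1, by have := j.2; omega⟩ ⟨2 * j.1, by have := j.2; omega⟩]
  · simp
    linarith

theorem fderiv_bound_compact {E F : Type*} [NormedAddCommGroup E] [NormedSpace ℝ E]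
    [NormedAddCommGroup F] [NormedSpace ℝ F]
    (f : E → F) (hf : ContDiff ℝ 1 f) {s : Set E} (hs : IsCompact s) :
    ∃ K : ℝ, ∀ x ∈ s, ‖fderiv ℝ f x‖ ≤ K :=
  hs.exists_bound_of_continuousOn (hf.continuous_fderiv (by norm_num)).continuousOn

/-- Symmetric difference estimate for a `C³` map, uniform on a bounded set of centres. -/
theorem symm_diff_bound {E F : Type*} [NormedAddCommGroup E] [NormedSpace ℝ E]
    [FiniteDimensional ℝ E] [NormedAddCommGroup F] [NormedSpace ℝ F]
    (f : E → F) (hf : ContDiff ℝ 3 f) (R : ℝ) :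
    ∃ M : ℝ, 0 ≤ M ∧ ∀ c : E, ‖c‖ ≤ R → ‖fderiv ℝ f c‖ ≤ M ∧ ∀ v : E, ‖v‖ ≤ 1 →
      ‖f (c + v) - f (c - v) - (2 : ℝ) • fderiv ℝ f c v‖ ≤ M * ‖v‖ ^ 3 := by
  have : ProperSpace E := FiniteDimensional.proper ℝ E
  have hG : ContDiff ℝ 2 (fderiv ℝ f) := hf.fderiv_right (by norm_num)
  have hH : ContDiff ℝ 1 (fderiv ℝ (fderiv ℝ f)) := hG.fderiv_right (by norm_num)
  have hcomp := isCompact_closedBall (0 : E) (R + 1)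
  obtain ⟨K, hK⟩ := fderiv_bound_compact (fderiv ℝ (fderiv ℝ f)) hH hcomp
  obtain ⟨A, hA⟩ := hcomp.exists_bound_of_continuousOn
    (f := fderiv ℝ f) hG.continuous.continuousOn
  have dF : Differentiable ℝ f := hf.differentiable (by norm_num)
  have dG : Differentiable ℝ (fderiv ℝ f) := hG.differentiable (by norm_num)
  have dH : Differentiable ℝ (fderiv ℝ (fderiv ℝ f)) := hH.differentiable (by norm_num)
  refine ⟨max A (2 * max K 0), by positivity, fun c hc => ⟨?_, fun v hv => ?_⟩⟩
  · exact (hA c (by simp; linarith)).trans (le_max_left _ _)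
  set r := ‖v‖ with hr
  have hr0 : 0 ≤ r := norm_nonneg v
  have hmem : ∀ w : E, ‖w‖ ≤ r → c + w ∈ Metric.closedBall (0 : E) (R + 1) ∧
      c - w ∈ Metric.closedBall (0 : E) (R + 1) := by
    intro w hw
    simp only [mem_closedBall_zero_iff]
    exact ⟨(norm_add_le _ _).trans (by linarith), (norm_sub_le _ _).trans (by linarith)⟩
  have plus : ∀ w : E, HasFDerivAt (fun w : E => c + w) (ContinuousLinearMap.id ℝ E) w :=
    fun w => (hasFDerivAt_id w).const_add c
  have minus : ∀ w : E, HasFDerivAt (fun w : E => c - w) (-ContinuousLinearMap.id ℝ E) w :=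
    fun w => (hasFDerivAt_id w).const_sub c
  have b1 : ∀ w : E, ‖w‖ ≤ r →
      ‖fderiv ℝ (fderiv ℝ f) (c + w) - fderiv ℝ (fderiv ℝ f) (c - w)‖ ≤ 2 * max K 0 * r := by
    intro w hw
    have := (convex_closedBall (0 : E) (R + 1)).norm_image_sub_le_of_norm_fderiv_le
      (𝕜 := ℝ) (f := fderiv ℝ (fderiv ℝ f)) (C := max K 0)
      (fun x _ => dH x) (fun x hx => (hK x hx).trans (le_max_left _ _)) (hmem w hw).2 (hmem w hw).1
    refine this.trans ?_
    have e : c + w - (c - w) = (2 : ℝ) • w := by rw [two_smul]; abel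
    rw [e, norm_smul, Real.norm_ofNat]
    have : 0 ≤ max K 0 := le_max_right _ _
    nlinarith [mul_le_mul_of_nonneg_left hw this]
  have b2 : ∀ w : E, ‖w‖ ≤ r →
      ‖fderiv ℝ f (c + w) + fderiv ℝ f (c - w) - (2 : ℝ) • fderiv ℝ f c‖
        ≤ 2 * max K 0 * r * r := by
    intro w hw
    have := (convex_closedBall (0 : E) r).norm_image_sub_le_of_norm_hasFDerivWithin_le
      (𝕜 := ℝ) (f := fun w => fderiv ℝ f (c + w) + fderiv ℝ f (c - w))
      (f' := fun w => fderiv ℝ (fderiv ℝ f) (c + w) - fderiv ℝ (fderiv ℝ f) (c - w))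
      (C := 2 * max K 0 * r) (x := 0) (y := w)
      (fun x _ => by
        have h1 := ((dG (c + x)).hasFDerivAt.comp x (plus x)).add
          ((dG (c - x)).hasFDerivAt.comp x (minus x))
        refine (h1.congr_fderiv ?_).hasFDerivWithinAt
        ext; simp [sub_eq_add_neg])
      (fun x hx => b1 x (by simpa using hx)) (by simpa using hr0) (by simpa using hw)
    simp only [add_zero, sub_zero] at this
    rw [two_smul]
    refine this.trans ?_
    have : 0 ≤ 2 * max K 0 * r := by positivity
    gcongr
  have := (convex_closedBall (0 : E) r).norm_image_sub_le_of_norm_hasFDerivWithin_le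
      (𝕜 := ℝ) (f := fun w => f (c + w) - f (c - w) - (2 : ℝ) • fderiv ℝ f c w)
      (f' := fun w => fderiv ℝ f (c + w) + fderiv ℝ f (c - w) - (2 : ℝ) • fderiv ℝ f c)
      (C := 2 * max K 0 * r * r) (x := 0) (y := v)
      (fun x _ => by
        have h1 := (((dF (c + x)).hasFDerivAt.comp x (plus x)).sub
          ((dF (c - x)).hasFDerivAt.comp x (minus x))).sub
          ((fderiv ℝ f c).hasFDerivAt.const_smul (2 : ℝ))
        refine (h1.congr_fderiv ?_).hasFDerivWithinAt
        ext; simp)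
      (fun x hx => b2 x (by simpa using hx)) (by simpa using hr0) (by simp [hr])
  simp only [add_zero, sub_zero, map_zero, smul_zero, sub_self] at this
  refine this.trans ?_
  rw [← hr]
  calc 2 * max K 0 * r * r * r = 2 * max K 0 * r ^ 3 := by ring
    _ ≤ _ := by gcongr; exact le_max_right _ _

theorem e2_norm_le (a b : ℝ) : ‖e2 a b‖ ≤ |a| + |b| := by
  rw [EuclideanSpace.norm_eq]
  apply Real.sqrt_le_iff.2
  refine ⟨by positivity, ?_⟩
  simp [e2, Fin.sum_univ_two]
  nlinarith [sq_abs a, sq_abs b, abs_nonneg a, abs_nonneg b, mul_nonneg (abs_nonneg a) (abs_nonneg b)]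

theorem e2_add (a b c d : ℝ) : e2 a b + e2 c d = e2 (a + c) (b + d) := by
  ext i; fin_cases i <;> simp [e2]

theorem e2_sub (a b c d : ℝ) : e2 a b - e2 c d = e2 (a - c) (b - d) := by
  ext i; fin_cases i <;> simp [e2]

theorem e2_smul (t a b : ℝ) : t • e2 a b = e2 (t * a) (t * b) := by
  ext i; fin_cases i <;> simp [e2]

theorem eq_e2 (z : EuclideanSpace ℝ (Fin 2)) : z = e2 (z 0) (z 1) := by
  ext i; fin_cases i <;> simp [e2]

/-- For a `C³`, `ℤ²`-periodic, isotropic map `ℓ : ℝ² → ℝ^{2n}`, the symplectic area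
defect of the sample quadrilaterals is `O(N^{-4})` uniformly:
`|ω(ℓ(z + (1/N,1/N)) − ℓ(z), ℓ(z + (0,1/N)) − ℓ(z + (1/N,0)))| ≤ C·N^{-4}`,
i.e. the discrete symplectic density of the samples is `O(N^{-2})`. -/
theorem discrete_symplectic_density_C0_estimate (n : ℕ)
    (ℓ : EuclideanSpace ℝ (Fin 2) → EuclideanSpace ℝ (Fin (2 * n)))
    (hC3 : ContDiff ℝ 3 ℓ)
    (hper : ∀ (z : EuclideanSpace ℝ (Fin 2)) (k l : ℤ), ℓ (z + e2 k l) = ℓ z)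
    (hiso : ∀ z : EuclideanSpace ℝ (Fin 2),
      stdSymp n (fderiv ℝ ℓ z (e2 1 0)) (fderiv ℝ ℓ z (e2 0 1)) = 0) :
    ∃ C > 0, ∀ (N : ℕ), 1 ≤ N → ∀ z : EuclideanSpace ℝ (Fin 2),
      |stdSymp n (ℓ (z + e2 (1 / N) (1 / N)) - ℓ z)
          (ℓ (z + e2 0 (1 / N)) - ℓ (z + e2 (1 / N) 0))| ≤ C / (N : ℝ) ^ 4 := by
  obtain ⟨M, hM0, hM⟩ := symm_diff_bound ℓ hC3 3
  set A : ℝ := M * 2 with hA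
  have hA0 : 0 ≤ A := by positivity
  refine ⟨2 * n * (2 * (A * M) + M * M) + 1, by positivity, fun N hN z => ?_⟩
  have hN1 : (1 : ℝ) ≤ N := by exact_mod_cast hN
  set h : ℝ := 1 / (N : ℝ) with hh
  have h0 : 0 < h := by positivity
  have h1 : h ≤ 1 := by rw [hh, div_le_one (by linarith)]; exact hN1
  -- reduce to the fundamental domain
  obtain ⟨z', hz', hred⟩ : ∃ z' : EuclideanSpace ℝ (Fin 2), ‖z'‖ ≤ 2 ∧
      ∀ w, ℓ (z + w) = ℓ (z' + w) := by
    refine ⟨e2 (Int.fract (z 0)) (Int.fract (z 1)), ?_, fun w => ?_⟩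
    · refine (e2_norm_le _ _).trans ?_
      rw [abs_of_nonneg (Int.fract_nonneg _), abs_of_nonneg (Int.fract_nonneg _)]
      linarith [Int.fract_lt_one (z 0), Int.fract_lt_one (z 1)]
    · rw [← hper (e2 (Int.fract (z 0)) (Int.fract (z 1)) + w) ⌊z 0⌋ ⌊z 1⌋]
      rw [add_right_comm, e2_add, Int.fract_add_floor, Int.fract_add_floor, ← eq_e2]
  have hz0 : ℓ z = ℓ z' := by simpa using hred 0
  rw [hz0, hred, hred, hred]
  set c := z' + e2 (h / 2) (h / 2) with hc
  have np : ‖e2 (h / 2) (h / 2)‖ ≤ h := (e2_norm_le _ _).trans (by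
    rw [abs_of_pos (by positivity)]; linarith)
  have nq : ‖e2 (-(h / 2)) (h / 2)‖ ≤ h := (e2_norm_le _ _).trans (by
    rw [abs_neg, abs_of_pos (by positivity)]; linarith)
  have hcn : ‖c‖ ≤ 3 := (norm_add_le _ _).trans (by linarith)
  obtain ⟨hD, hS⟩ := hM c hcn
  have e1 : c + e2 (h / 2) (h / 2) = z' + e2 h h := by
    rw [hc, add_assoc, e2_add]; congr 2 <;> ring
  have e3 : c - e2 (h / 2) (h / 2) = z' := by rw [hc]; abel
  have e4 : c + e2 (-(h / 2)) (h / 2) = z' + e2 0 h := by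
    rw [hc, add_assoc, e2_add]; congr 2 <;> ring
  have e5 : c - e2 (-(h / 2)) (h / 2) = z' + e2 h 0 := by
    rw [hc, add_sub_assoc, e2_sub]; congr 2 <;> ring
  have Sp := hS _ (np.trans h1)
  have Sq := hS _ (nq.trans h1)
  rw [e1, e3, ← map_smul] at Sp
  rw [e4, e5, ← map_smul] at Sq
  have p1 : (2 : ℝ) • e2 (h / 2) (h / 2) = h • (e2 1 0 + e2 0 1) := by
    rw [e2_add, e2_smul, e2_smul]; congr 1 <;> ring
  have q1 : (2 : ℝ) • e2 (-(h / 2)) (h / 2) = h • (e2 0 1 - e2 1 0) := by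
    rw [e2_sub, e2_smul, e2_smul]; congr 1 <;> ring
  rw [p1, map_smul, map_add] at Sp
  rw [q1, map_smul, map_sub] at Sq
  have n1 : ‖e2 1 0‖ ≤ 1 := (e2_norm_le _ _).trans (by norm_num)
  have n2 : ‖e2 0 1‖ ≤ 1 := (e2_norm_le _ _).trans (by norm_num)
  set x := fderiv ℝ ℓ c (e2 1 0) with hx
  set y := fderiv ℝ ℓ c (e2 0 1) with hy
  have nx : ‖x‖ ≤ M := ((fderiv ℝ ℓ c).le_opNorm _).trans (by
    nlinarith [norm_nonneg (e2 1 0)])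
  have ny : ‖y‖ ≤ M := ((fderiv ℝ ℓ c).le_opNorm _).trans (by
    nlinarith [norm_nonneg (e2 0 1)])
  have na : ‖x + y‖ ≤ A := (norm_add_le _ _).trans (by linarith)
  have nb : ‖y - x‖ ≤ A := (norm_sub_le _ _).trans (by linarith)
  set r := ℓ (z' + e2 h h) - ℓ z' - h • (x + y) with hr
  set s := ℓ (z' + e2 0 h) - ℓ (z' + e2 h 0) - h • (y - x) with hs
  have nr : ‖r‖ ≤ M * h ^ 3 := Sp.trans (by gcongr)
  have ns : ‖s‖ ≤ M * h ^ 3 := Sq.trans (by gcongr)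
  have u1 : ℓ (z' + e2 h h) - ℓ z' = h • (x + y) + r := by rw [hr]; abel
  have u2 : ℓ (z' + e2 0 h) - ℓ (z' + e2 h 0) = h • (y - x) + s := by rw [hs]; abel
  rw [u1, u2, stdSymp_expand, stdSymp_diag, hiso c]
  have t1 : |stdSymp n (x + y) s| ≤ 2 * n * (A * (M * h ^ 3)) :=
    (stdSymp_bound _ _ _).trans (by gcongr)
  have t2 : |stdSymp n r (y - x)| ≤ 2 * n * ((M * h ^ 3) * A) :=
    (stdSymp_bound _ _ _).trans (by gcongr)
  have t3 : |stdSymp n r s| ≤ 2 * n * ((M * h ^ 3) * (M * h ^ 3)) :=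
    (stdSymp_bound _ _ _).trans (by gcongr)
  have hfin : (2 * n * (2 * (A * M) + M * M) + 1) / (N : ℝ) ^ 4
      = (2 * n * (2 * (A * M) + M * M) + 1) * h ^ 4 := by
    rw [hh]; field_simp
  rw [hfin]
  have h64 : h ^ 6 ≤ h ^ 4 := pow_le_pow_of_le_one h0.le h1 (by norm_num)
  calc |h ^ 2 * (2 * 0) + h * stdSymp n (x + y) s + h * stdSymp n r (y - x) + stdSymp n r s|
      ≤ |h * stdSymp n (x + y) s| + |h * stdSymp n r (y - x)| + |stdSymp n r s| := by
        rw [mul_zero, mul_zero, zero_add]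
        exact abs_add_three _ _ _
    _ = h * |stdSymp n (x + y) s| + h * |stdSymp n r (y - x)| + |stdSymp n r s| := by
        rw [abs_mul, abs_mul, abs_of_pos h0]
    _ ≤ h * (2 * n * (A * (M * h ^ 3))) + h * (2 * n * ((M * h ^ 3) * A))
        + 2 * n * ((M * h ^ 3) * (M * h ^ 3)) := by gcongr
    _ = 2 * n * (2 * (A * M)) * h ^ 4 + 2 * n * (M * M) * h ^ 6 := by ring
    _ ≤ 2 * n * (2 * (A * M)) * h ^ 4 + 2 * n * (M * M) * h ^ 4 := by gcongr
    _ ≤ _ := by nlinarith [pow_pos h0 4]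
end

section
/- Let T ⊆ ℝ² be a nondegenerate triangle with vertices p₀, p₁, p₂, diameter h, and inradius ρ > 0. Let ℓ : ℝ² → ℝ^m be a C² map, and set M = sup_{z ∈ T} ‖D²ℓ_z‖ (operator norm of the second Fréchet derivative). Let g : ℝ² → ℝ^m be the unique affine map with g(pᵢ) = ℓ(pᵢ) for i = 0, 1, 2. Then there is a constant C > 0, independent of T, ℓ, m, such that: sup_{z ∈ T} ‖g(z) − ℓ(z)‖ ≤ C·M·h², and sup_{z ∈ T} ‖Dg − Dℓ_z‖ ≤ C·M·h²/ρ, where Dg denotes the (constant) linear part of g and Dℓ_z the Fréchet derivative of ℓ at z. (Thus on a triangulation whose triangles have size of order N^{-1} and uniformly bounded shape, the piecewise affine interpolant of a smooth map approximates it to order N^{-2} in C⁰ and order N^{-1} in C¹.) -/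
/-- Piecewise affine interpolation estimate: there is a universal constant `C > 0` such
that for every nondegenerate triangle `T ⊆ ℝ²` with vertices `p₀, p₁, p₂`, diameter
`h` and a disk of radius `ρ > 0` inscribed in `T`, every `C²` map `ℓ : ℝ² → ℝ^m` with
`‖D²ℓ‖ ≤ M` on `T`, and the affine map `g` interpolating `ℓ` at the vertices, one has
`‖g − ℓ‖ ≤ C·M·h²` and `‖Dg − Dℓ‖ ≤ C·M·h²/ρ` on `T`. -/
theorem affine_interpolation_estimate :
    ∃ C > 0, ∀ (m : ℕ) (p₀ p₁ p₂ : EuclideanSpace ℝ (Fin 2)),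
      AffineIndependent ℝ ![p₀, p₁, p₂] →
      ∀ (h ρ M : ℝ),
        Metric.diam (convexHull ℝ ({p₀, p₁, p₂} : Set (EuclideanSpace ℝ (Fin 2)))) = h →
        0 < ρ →
        (∃ c : EuclideanSpace ℝ (Fin 2),
          Metric.closedBall c ρ ⊆ convexHull ℝ ({p₀, p₁, p₂} : Set (EuclideanSpace ℝ (Fin 2)))) →
        ∀ ℓ : EuclideanSpace ℝ (Fin 2) → EuclideanSpace ℝ (Fin m),
          ContDiff ℝ 2 ℓ →
          (∀ z ∈ convexHull ℝ ({p₀, p₁, p₂} : Set (EuclideanSpace ℝ (Fin 2))),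
            ‖fderiv ℝ (fderiv ℝ ℓ) z‖ ≤ M) →
          ∀ g : EuclideanSpace ℝ (Fin 2) →ᵃ[ℝ] EuclideanSpace ℝ (Fin m),
            g p₀ = ℓ p₀ → g p₁ = ℓ p₁ → g p₂ = ℓ p₂ →
            ∀ z ∈ convexHull ℝ ({p₀, p₁, p₂} : Set (EuclideanSpace ℝ (Fin 2))),
              ‖g z - ℓ z‖ ≤ C * M * h ^ 2 ∧
              ‖(LinearMap.toContinuousLinearMap g.linear) - fderiv ℝ ℓ z‖ ≤
                C * M * h ^ 2 / ρ := by
  refine ⟨2, by norm_num, ?_⟩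
  intro m p₀ p₁ p₂ _ h ρ M hh hρ hc ℓ hℓ hM g g0 g1 g2 z hz
  obtain ⟨c, hc⟩ := hc
  set T := convexHull ℝ ({p₀, p₁, p₂} : Set (EuclideanSpace ℝ (Fin 2))) with hT
  have hconv : Convex ℝ T := convex_convexHull ℝ _
  have hbdd : Bornology.IsBounded T := by
    rw [hT, isBounded_convexHull]
    exact (Set.toFinite _).isBounded
  have hdist : ∀ x ∈ T, ∀ y ∈ T, ‖x - y‖ ≤ h := by
    intro x hx y hy
    rw [← dist_eq_norm, ← hh]
    exact Metric.dist_le_diam_of_mem hbdd hx hy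
  have hM0 : 0 ≤ M := (norm_nonneg (fderiv ℝ (fderiv ℝ ℓ) z)).trans (hM z hz)
  have hh0 : 0 ≤ h := (norm_nonneg _).trans (hdist z hz z hz)
  have hd1 : Differentiable ℝ ℓ := hℓ.differentiable (by norm_num)
  have hd2 : Differentiable ℝ (fderiv ℝ ℓ) :=
    (hℓ.fderiv_right (m := 1) (by norm_num)).differentiable (by norm_num)
  have hlip : ∀ x ∈ T, ‖fderiv ℝ ℓ x - fderiv ℝ ℓ z‖ ≤ M * h := by
    intro x hx
    exact (hconv.norm_image_sub_le_of_norm_fderiv_le (fun w _ => hd2 w) hM hz hx).trans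
      (mul_le_mul_of_nonneg_left (hdist x hx z hz) hM0)
  have htay : ∀ x ∈ T, ‖ℓ x - ℓ z - fderiv ℝ ℓ z (x - z)‖ ≤ M * h ^ 2 := by
    intro x hx
    refine (hconv.norm_image_sub_le_of_norm_fderiv_le' (fun w _ => hd1 w) hlip hz hx).trans ?_
    calc M * h * ‖x - z‖ ≤ M * h * h :=
          mul_le_mul_of_nonneg_left (hdist x hx z hz) (mul_nonneg hM0 hh0)
      _ = M * h ^ 2 := by ring
  -- the affine error map
  let a : EuclideanSpace ℝ (Fin 2) →ᵃ[ℝ] EuclideanSpace ℝ (Fin m) :=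
    g - (fderiv ℝ ℓ z).toLinearMap.toAffineMap - AffineMap.const ℝ _ (ℓ z - fderiv ℝ ℓ z z)
  have ha : ∀ w, a w = g w - ℓ z - fderiv ℝ ℓ z (w - z) := by
    intro w
    simp [a]
    abel
  have hsub : T ⊆ a ⁻¹' (Metric.closedBall 0 (M * h ^ 2)) := by
    refine convexHull_min ?_ ((convex_closedBall _ _).affine_preimage a)
    have hv : ∀ p ∈ ({p₀, p₁, p₂} : Set (EuclideanSpace ℝ (Fin 2))), g p = ℓ p := by
      rintro p (rfl | rfl | rfl) <;> assumption
    intro p hp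
    simp only [Set.mem_preimage, mem_closedBall_zero_iff]
    rw [ha, hv p hp]
    exact htay p (subset_convexHull ℝ _ hp)
  have hbound : ∀ w ∈ T, ‖g w - ℓ z - fderiv ℝ ℓ z (w - z)‖ ≤ M * h ^ 2 := by
    intro w hw
    have := hsub hw
    simpa only [Set.mem_preimage, mem_closedBall_zero_iff, ha] using this
  have hMh : 0 ≤ M * h ^ 2 := by positivity
  constructor
  · have := hbound z hz
    simp only [sub_self, map_zero, sub_zero] at this
    linarith
  · refine ContinuousLinearMap.opNorm_le_of_unit_norm (by positivity) ?_
    intro u hu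
    have h1 := hbound c (hc (Metric.mem_closedBall_self hρ.le))
    have h2 := hbound (c + ρ • u) (hc (by
      simp [norm_smul, hu, abs_of_pos hρ]))
    have hg : g (c + ρ • u) = ρ • g.linear u + g c := by
      have := g.map_vadd c (ρ • u)
      simp only [vadd_eq_add, map_smul] at this
      rw [add_comm c, this]
    have key : ρ • ((LinearMap.toContinuousLinearMap g.linear - fderiv ℝ ℓ z) u) =
        (g (c + ρ • u) - ℓ z - fderiv ℝ ℓ z (c + ρ • u - z)) -
          (g c - ℓ z - fderiv ℝ ℓ z (c - z)) := by
      rw [hg]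
      simp [smul_sub]
      abel
    have h3 := norm_sub_le (g (c + ρ • u) - ℓ z - fderiv ℝ ℓ z (c + ρ • u - z))
      (g c - ℓ z - fderiv ℝ ℓ z (c - z))
    rw [← key, norm_smul, Real.norm_of_nonneg hρ.le] at h3
    rw [le_div_iff₀ hρ]
    linarith
end
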